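/- Let m be a positive integer and let α, β > 0 be real with αβ = 4π³. Then ∑_{n=1}^∞ ψ_{2m+1}(n) n^{−1/2} e^{−√(nβ)} sin(π/4 − √(nβ)) = (√β/√2)·ζ(−1−2m) − (2m)!·sin(πm/2)·ζ(1+m)·(2β)^{−(m+1/2)} + (1/√2)·ζ(1/2)·ζ(−2m) + 2^m (2π/β)^{m+1/2} Γ(m+1/2) ∑_{n=1}^∞ ψ_{−2m}(n)·n^m·₁F₁(m+1/2; 1/2; −nα). -/

import Mathlib

open Complex Finset
open scoped Real BigOperators Classical

/-- `ψ_r(n) = ∑_{j² ∣ n, j ≥ 1} j^r` with real exponent. -/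
noncomputable def rpsi (r : ℝ) (n : ℕ) : ℝ :=
  ∑ j ∈ (Finset.Icc 1 n).filter (fun j => j ^ 2 ∣ n), (j : ℝ) ^ r

/-- Rising factorial `(a)_k`. -/
noncomputable def poch (a : ℂ) (k : ℕ) : ℂ := ∏ i ∈ Finset.range k, (a + i)

/-- Kummer's confluent hypergeometric function `₁F₁(a;b;z)`. -/
noncomputable def F11 (a b z : ℂ) : ℂ :=
  ∑' k : ℕ, poch a k / (poch b k * (k.factorial : ℂ)) * z ^ k


/-- The polynomial `∑ C(m+i,2*i) X^i D^(m-i)`. -/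
noncomputable def Spoly (m : ℕ) (X D : ℂ) : ℂ :=
  ∑ i ∈ Finset.range (m + 1), (Nat.choose (m + i) (2 * i) : ℂ) * X ^ i * D ^ (m - i)

/-- Companion polynomial `∑ C(m+i+1,2*i+1) X^i D^(m-i)`. -/
noncomputable def Tpoly (m : ℕ) (X D : ℂ) : ℂ :=
  ∑ i ∈ Finset.range (m + 1), (Nat.choose (m + i + 1) (2 * i + 1) : ℂ) * X ^ i * D ^ (m - i)

lemma Spoly_succ (m : ℕ) (X D : ℂ) :
    Spoly (m + 1) X D = D * Spoly m X D + X * Tpoly m X D := by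
  unfold Spoly Tpoly
  rw [Finset.sum_range_succ' (n := m + 1), Finset.sum_range_succ' (n := m) (f := fun i => (Nat.choose (m + i) (2 * i) : ℂ) * X ^ i * D ^ (m - i))]
  rw [mul_add, Finset.mul_sum, Finset.mul_sum]
  have h1 : ∑ i ∈ Finset.range (m + 1), (Nat.choose (m + 1 + (i + 1)) (2 * (i + 1)) : ℂ) * X ^ (i + 1) * D ^ (m + 1 - (i + 1))
     = ∑ i ∈ Finset.range (m + 1), (X * ((Nat.choose (m + i + 1) (2 * i + 1) : ℂ) * X ^ i * D ^ (m - i))) +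
       ∑ i ∈ Finset.range (m + 1), (Nat.choose (m + (i + 1)) (2 * (i + 1)) : ℂ) * X ^ (i+1) * D ^ (m - i) := by
    rw [← Finset.sum_add_distrib]
    refine Finset.sum_congr rfl fun i hi => ?_
    have : Nat.choose (m + 1 + (i + 1)) (2 * (i + 1)) = Nat.choose (m + i + 1) (2 * i + 1) + Nat.choose (m + (i + 1)) (2 * (i + 1)) := by
      rw [show m + 1 + (i+1) = (m + i + 1) + 1 by ring, show 2 * (i+1) = (2 * i + 1) + 1 by ring,
        Nat.choose_succ_succ]
      congr 2
    rw [this]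
    rw [show m + 1 - (i + 1) = m - i by omega]
    push_cast
    ring
  rw [h1, Finset.sum_range_succ (n := m) (f := fun i => (Nat.choose (m + (i + 1)) (2 * (i + 1)) : ℂ) * X ^ (i+1) * D ^ (m - i))]
  have h2 : Nat.choose (m + (m + 1)) (2 * (m + 1)) = 0 := Nat.choose_eq_zero_of_lt (by omega)
  rw [h2]
  have h3 : ∑ i ∈ Finset.range m, (Nat.choose (m + (i + 1)) (2 * (i + 1)) : ℂ) * X ^ (i+1) * D ^ (m - i)
    = ∑ i ∈ Finset.range m, D * ((Nat.choose (m + (i + 1)) (2 * (i + 1)) : ℂ) * X ^ (i+1) * D ^ (m - (i+1))) := by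
    refine Finset.sum_congr rfl fun i hi => ?_
    rw [Finset.mem_range] at hi
    rw [show m - i = m - (i+1) + 1 by omega, pow_succ]
    ring
  rw [h3]
  simp
  ring

lemma Tpoly_succ (m : ℕ) (X D : ℂ) :
    Tpoly (m + 1) X D = D * Tpoly m X D + Spoly (m + 1) X D := by
  unfold Spoly Tpoly
  rw [Finset.mul_sum]
  have h0 : ∑ i ∈ Finset.range (m + 1), D * ((Nat.choose (m + i + 1) (2 * i + 1) : ℂ) * X ^ i * D ^ (m - i))
    = ∑ i ∈ Finset.range (m + 1 + 1), (Nat.choose (m + i + 1) (2 * i + 1) : ℂ) * X ^ i * D ^ (m + 1 - i) := by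
    rw [Finset.sum_range_succ (n := m + 1), Nat.choose_eq_zero_of_lt (show m + (m+1) + 1 < 2 * (m+1) + 1 by omega)]
    simp only [Nat.cast_zero, zero_mul, add_zero]
    refine Finset.sum_congr rfl fun i hi => ?_
    rw [Finset.mem_range] at hi
    rw [show m + 1 - i = m - i + 1 by omega, pow_succ]
    ring
  rw [h0, ← Finset.sum_add_distrib]
  refine Finset.sum_congr rfl fun i hi => ?_
  have : Nat.choose (m + 1 + i + 1) (2 * i + 1) = Nat.choose (m + 1 + i) (2 * i) + Nat.choose (m + i + 1) (2 * i + 1) := by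
    rw [Nat.choose_succ_succ, show m + 1 + i = m + i + 1 by ring]
  rw [this]
  push_cast
  ring

lemma ST_closed (m : ℕ) (a c : ℂ) :
    (a + c) ^ (2 * m + 1) + (a - c) ^ (2 * m + 1)
      = 2 * a * Spoly m (4 * c ^ 2) (a ^ 2 - c ^ 2) ∧
    (a + c) ^ (2 * m + 2) - (a - c) ^ (2 * m + 2)
      = 4 * a * c * Tpoly m (4 * c ^ 2) (a ^ 2 - c ^ 2) := by
  induction m with
  | zero => constructor <;> simp [Spoly, Tpoly] <;> ring
  | succ m ih =>
    have e1 : (a + c) ^ (2 * (m + 1) + 1) + (a - c) ^ (2 * (m + 1) + 1)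
        = 2 * a * Spoly (m + 1) (4 * c ^ 2) (a ^ 2 - c ^ 2) := by
      rw [Spoly_succ]
      linear_combination (a ^ 2 - c ^ 2) * ih.1 + 2 * c * ih.2
    refine ⟨e1, ?_⟩
    rw [Tpoly_succ]
    linear_combination (a ^ 2 - c ^ 2) * ih.2 + 2 * c * e1

lemma ST_special (m : ℕ) :
    Spoly m (-4) 1 = (-1) ^ m * (2 * m + 1) ∧ Tpoly m (-4) 1 = (-1) ^ m * (m + 1) := by
  induction m with
  | zero => constructor <;> simp [Spoly, Tpoly]
  | succ m ih =>
    have e1 : Spoly (m + 1) (-4) 1 = (-1) ^ (m + 1) * (2 * ((m + 1 : ℕ) : ℂ) + 1) := by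
      rw [Spoly_succ, ih.1, ih.2]; push_cast; ring
    refine ⟨e1, ?_⟩
    rw [Tpoly_succ, e1, ih.2]; push_cast; ring

lemma poch_succ' (a : ℂ) (k : ℕ) : poch a (k + 1) = a * poch (a + 1) k := by
  unfold poch
  rw [Finset.prod_range_succ']
  simp only [Nat.cast_zero, add_zero, mul_comm a]
  congr 1
  refine Finset.prod_congr rfl fun i _ => ?_
  push_cast; ring

lemma poch_succ (a : ℂ) (k : ℕ) : poch a (k + 1) = poch a k * (a + k) := by
  unfold poch
  rw [Finset.prod_range_succ]

lemma poch_shift (x : ℂ) (n : ℕ) :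
    poch x n + n * poch (x + 1) (n - 1) = poch (x + 1) n := by
  cases n with
  | zero => simp [poch]
  | succ n =>
    rw [poch_succ', poch_succ]
    simp only [Nat.add_sub_cancel]
    push_cast; ring

lemma poch_vandermonde (m : ℕ) : ∀ (b : ℂ) (k : ℕ), poch (b + m) k =
    ∑ i ∈ Finset.range (m + 1),
      (Nat.choose m i : ℂ) * (Nat.descFactorial k i : ℂ) * poch (b + i) (k - i) := by
  induction m with
  | zero => intro b k; simp
  | succ m ih =>
    intro b k
    rw [show b + ((m + 1 : ℕ) : ℂ) = (b + 1) + m by push_cast; ring, ih]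
    rw [Finset.sum_range_succ' (n := m + 1)]
    have h1 : ∑ i ∈ Finset.range (m + 1), (Nat.choose (m + 1) (i + 1) : ℂ) * (Nat.descFactorial k (i + 1) : ℂ) * poch (b + ((i + 1 : ℕ) : ℂ)) (k - (i + 1))
      = ∑ i ∈ Finset.range (m + 1), (Nat.choose m i : ℂ) * (Nat.descFactorial k (i + 1) : ℂ) * poch (b + ((i + 1 : ℕ) : ℂ)) (k - (i + 1)) +
       ∑ i ∈ Finset.range (m + 1), (Nat.choose m (i + 1) : ℂ) * (Nat.descFactorial k (i + 1) : ℂ) * poch (b + ((i + 1 : ℕ) : ℂ)) (k - (i + 1)) := by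
      rw [← Finset.sum_add_distrib]
      refine Finset.sum_congr rfl fun i hi => ?_
      rw [Nat.choose_succ_succ]; push_cast; ring
    rw [h1, add_assoc]
    have h2 : ∑ i ∈ Finset.range (m + 1), (Nat.choose m (i + 1) : ℂ) * (Nat.descFactorial k (i + 1) : ℂ) * poch (b + ((i + 1 : ℕ) : ℂ)) (k - (i + 1)) + ((m + 1).choose 0 : ℂ) * (Nat.descFactorial k 0 : ℂ) * poch (b + ((0 : ℕ) : ℂ)) (k - 0)
      = ∑ i ∈ Finset.range (m + 1), (Nat.choose m i : ℂ) * (Nat.descFactorial k i : ℂ) * poch (b + i) (k - i) := by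
      rw [Finset.sum_range_succ, Nat.choose_succ_self, Finset.sum_range_succ' (n := m) (f := fun i => (Nat.choose m i : ℂ) * (Nat.descFactorial k i : ℂ) * poch (b + i) (k - i))]
      simp
    rw [h2, ← Finset.sum_add_distrib]
    refine Finset.sum_congr rfl fun i hi => ?_
    rw [show b + 1 + (i : ℂ) = b + i + 1 by ring, ← poch_shift, Nat.descFactorial_succ,
      show k - i - 1 = k - (i + 1) by omega]
    push_cast
    rw [show b + ((i : ℂ) + 1) = b + i + 1 by ring]
    ring

lemma poch_add (b : ℂ) (i n : ℕ) : poch b (i + n) = poch b i * poch (b + i) n := by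
  induction n with
  | zero => simp [poch]
  | succ n ih => rw [← add_assoc, poch_succ, poch_succ, ih]; push_cast; ring

lemma poch_half_ne (i : ℕ) : poch (1 / 2) i ≠ 0 := by
  unfold poch
  rw [Finset.prod_ne_zero_iff]
  intro j _ h
  have := congrArg Complex.re h
  simp at this
  have h2 : (0 : ℝ) ≤ (j : ℝ) := Nat.cast_nonneg j
  linarith

lemma poch_half_eq (i : ℕ) : poch (1 / 2) i * (4 ^ i * (i.factorial : ℂ)) = ((2 * i).factorial : ℂ) := by
  induction i with
  | zero => simp [poch]
  | succ i ih =>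
    rw [poch_succ, show 2 * (i + 1) = (2 * i + 1) + 1 by ring, Nat.factorial_succ, Nat.factorial_succ, Nat.factorial_succ]
    push_cast
    rw [← ih]
    ring

lemma F11_coeff (m k : ℕ) (z : ℂ) :
    poch ((m : ℂ) + 1 / 2) k / (poch (1 / 2) k * (k.factorial : ℂ)) * z ^ k
    = ∑ i ∈ Finset.range (m + 1), (Nat.choose m i : ℂ) / poch (1 / 2) i * z ^ i *
        (if i ≤ k then z ^ (k - i) / ((k - i).factorial : ℂ) else 0) := by
  rw [add_comm (m : ℂ), poch_vandermonde, Finset.sum_div, Finset.sum_mul]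
  refine Finset.sum_congr rfl fun i hi => ?_
  split_ifs with h
  · obtain ⟨n, rfl⟩ := Nat.exists_eq_add_of_le h
    have h1 := poch_half_ne (i + n)
    rw [poch_add] at h1 ⊢
    have h2 := left_ne_zero_of_mul h1
    have h3 := right_ne_zero_of_mul h1
    have h4 : ((i + n).factorial : ℂ) = (Nat.descFactorial (i + n) i : ℂ) * (n.factorial : ℂ) := by
      rw [← Nat.cast_mul, ← Nat.factorial_mul_descFactorial h, mul_comm]
      simp
    have h5 : ((i + n).factorial : ℂ) ≠ 0 := by exact_mod_cast Nat.factorial_ne_zero _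
    rw [h4] at h5 ⊢
    have h6 := left_ne_zero_of_mul h5
    have h7 := right_ne_zero_of_mul h5
    simp only [Nat.add_sub_cancel_left]
    generalize poch (1 / 2 + (i : ℂ)) n = P at *
    field_simp
    ring
  · rw [Nat.descFactorial_eq_zero_iff_lt.mpr (by omega)]
    simp

lemma F11_eq (m : ℕ) (z : ℂ) :
    F11 ((m : ℂ) + 1 / 2) (1 / 2) z =
      (∑ i ∈ Finset.range (m + 1), (Nat.choose m i : ℂ) / poch (1 / 2) i * z ^ i) * cexp z := by
  unfold F11
  simp_rw [F11_coeff]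
  have key : ∀ i : ℕ, HasSum (fun k : ℕ => if i ≤ k then z ^ (k - i) / ((k - i).factorial : ℂ) else 0) (cexp z) := by
    intro i
    have h0 : HasSum (fun k : ℕ => z ^ k / (k.factorial : ℂ)) (cexp z) := by
      rw [Complex.exp_eq_exp_ℂ]
      exact NormedSpace.expSeries_div_hasSum_exp z
    rw [← hasSum_nat_add_iff' i]
    have : ∑ j ∈ Finset.range i, (if i ≤ j then z ^ (j - i) / ((j - i).factorial : ℂ) else 0) = 0 := by
      refine Finset.sum_eq_zero fun j hj => ?_
      rw [Finset.mem_range] at hj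
      rw [if_neg (by omega)]
    rw [this, sub_zero]
    simpa using h0
  rw [Finset.sum_mul]
  exact (hasSum_sum fun i _ => (key i).mul_left _).tsum_eq

lemma F11_eq' (m : ℕ) (z : ℂ) :
    F11 ((m : ℂ) + 1 / 2) (1 / 2) z =
      (m.factorial : ℂ) * (∑ i ∈ Finset.range (m + 1), (Nat.choose (m + i) (2 * i) : ℂ) / ((m + i).factorial : ℂ) * (4 * z) ^ i) * cexp z := by
  rw [F11_eq, Finset.mul_sum]
  congr 1
  refine Finset.sum_congr rfl fun i hi => ?_
  have hi' : i ≤ m := by rw [Finset.mem_range] at hi; omega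
  have h1 := poch_half_eq i
  have h2 := poch_half_ne i
  have f (n : ℕ) : (n.factorial : ℂ) ≠ 0 := by exact_mod_cast Nat.factorial_ne_zero _
  rw [Nat.cast_choose ℂ hi', Nat.cast_choose ℂ (show 2 * i ≤ m + i by omega),
    show m + i - 2 * i = m - i by omega, ← h1, mul_pow]
  have := f i
  have := f m
  have := f (m - i)
  have := f (m + i)
  field_simp

lemma Lip_summable (q : ℕ) (hq : 1 ≤ q) (z : ℂ) :
    Summable fun l : ℤ => ((z + 2 * π * I * l) ^ (q + 1))⁻¹ := by
  have h := (EisensteinSeries.linear_right_summable (-I * z / (2 * π)) 1 (k := (q + 1 : ℕ)) (by norm_cast; omega)).mul_left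
    (((2 * π * I) ^ (q + 1))⁻¹ : ℂ)
  refine h.congr fun l => ?_
  rw [zpow_natCast, ← mul_inv, ← mul_pow]
  congr 2
  have : (π : ℂ) ≠ 0 := by exact_mod_cast Real.pi_ne_zero
  field_simp
  push_cast
  linear_combination (-z) * I_sq

lemma Lip (q : ℕ) (hq : 1 ≤ q) (z : ℂ) (hz : 0 < z.re) :
    ∑' n : ℕ+, (n : ℂ) ^ q * cexp (-(n * z)) =
      (q.factorial : ℂ) * ∑' l : ℤ, ((z + 2 * π * I * l) ^ (q + 1))⁻¹ := by
  have hpi : (π : ℂ) ≠ 0 := by exact_mod_cast Real.pi_ne_zero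
  have him : 0 < (I * z / (2 * π)).im := by
    rw [show I * z / (2 * π) = (((2 * π)⁻¹ : ℝ) : ℂ) * (I * z) by push_cast; field_simp]
    rw [Complex.im_ofReal_mul, Complex.I_mul_im]
    positivity
  have h := EisensteinSeries.qExpansion_identity_pnat hq ⟨I * z / (2 * π), him⟩
  have e1 : ∀ n : ℕ+, (n : ℂ) ^ q * cexp (2 * π * I * (I * z / (2 * π))) ^ (n : ℕ) = (n : ℂ) ^ q * cexp (-(n * z)) := by
    intro n
    rw [← Complex.exp_nat_mul]
    congr 2
    field_simp
    linear_combination z * I_sq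
  simp only at h
  simp_rw [e1] at h
  rw [← (Equiv.neg ℤ).tsum_eq] at h
  have e2 : ∀ l : ℤ, 1 / (I * z / (2 * π) + (((Equiv.neg ℤ) l : ℤ) : ℂ)) ^ (q + 1) = (-2 * π * I) ^ (q + 1) * ((z + 2 * π * I * l) ^ (q + 1))⁻¹ := by
    intro l
    rw [one_div, ← inv_pow, ← inv_pow, ← mul_pow]
    congr 1
    rw [← inv_inv (-2 * π * I), ← mul_inv]
    congr 1
    have : (-2 * π * I : ℂ)⁻¹ = I / (2 * π) := by
      rw [inv_eq_iff_eq_inv, inv_div]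
      field_simp
      simp
    rw [this]
    simp
    field_simp
    linear_combination (-2 * π * l) * I_sq
  simp_rw [e2, tsum_mul_left] at h
  have h0 : (-2 * π * I : ℂ) ^ (q + 1) ≠ 0 := by simp [hpi]
  have f : (q.factorial : ℂ) ≠ 0 := by exact_mod_cast Nat.factorial_ne_zero _
  rw [div_mul_eq_mul_div, mul_div_assoc] at h
  have := mul_left_cancel₀ h0 h
  rw [this, mul_div_cancel₀ _ f]

lemma fiber_sum (h : ℕ → ℕ → ℂ) (hs : Summable fun p : ℕ+ × ℕ+ => h p.1 p.2) :
    ∑' n : ℕ, ∑ j ∈ (Finset.Icc 1 (n + 1)).filter (fun j => j ^ 2 ∣ (n + 1)), h j ((n + 1) / j ^ 2)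
      = ∑' p : ℕ+ × ℕ+, h p.1 p.2 := by
  have h1 := hs.hasSum.tsum_fiberwise (fun p : ℕ+ × ℕ+ => p.1 ^ 2 * p.2)
  rw [← h1.tsum_eq]
  rw [← tsum_pnat_eq_tsum_succ (f := fun n => ∑ j ∈ (Finset.Icc 1 n).filter (fun j => j ^ 2 ∣ n), h j (n / j ^ 2))]
  refine tsum_congr fun n => ?_
  rw [← Finset.sum_coe_sort, ← tsum_fintype (L := SummationFilter.unconditional _)]
  let e : ((fun p : ℕ+ × ℕ+ => p.1 ^ 2 * p.2) ⁻¹' {n}) →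
      { x // x ∈ (Finset.Icc 1 (n : ℕ)).filter (fun j => j ^ 2 ∣ (n : ℕ)) } := fun p =>
    ⟨(p.1.1 : ℕ), by
      have h2 : p.1.1 ^ 2 * p.1.2 = n := p.2
      have h3 : (p.1.1 : ℕ) ^ 2 * p.1.2 = n := by simpa using congrArg PNat.val h2
      rw [Finset.mem_filter, Finset.mem_Icc]
      refine ⟨⟨p.1.1.pos, ?_⟩, ⟨_, h3.symm⟩⟩
      rw [← h3]
      have := p.1.1.pos
      have := p.1.2.pos
      nlinarith [Nat.mul_pos p.1.1.pos p.1.2.pos]⟩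
  have he : Function.Bijective e := by
    constructor
    · rintro ⟨⟨j, k⟩, hp⟩ ⟨⟨j', k'⟩, hp'⟩ heq
      have hj : j = j' := by
        have := congrArg Subtype.val heq
        exact PNat.eq this
      have h2 : j ^ 2 * k = n := hp
      have h3 : j' ^ 2 * k' = n := hp'
      subst hj
      have : k = k' := mul_left_cancel (h2.trans h3.symm)
      subst this
      rfl
    · rintro ⟨j, hj⟩
      rw [Finset.mem_filter, Finset.mem_Icc] at hj
      obtain ⟨⟨hj1, hj2⟩, k, hk⟩ := hj
      have hk0 : 0 < k := by
        rcases Nat.eq_zero_or_pos k with h0 | h0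
        · rw [h0, mul_zero] at hk
          exact absurd hk n.ne_zero
        · exact h0
      refine ⟨⟨(⟨j, hj1⟩, ⟨k, hk0⟩), ?_⟩, rfl⟩
      show _ = _
      apply PNat.eq
      rw [hk, PNat.mul_coe, PNat.pow_coe]
      rfl
  rw [← (Equiv.ofBijective e he).tsum_eq]
  refine tsum_congr fun p => ?_
  have h2 : p.1.1 ^ 2 * p.1.2 = n := p.2
  have h3 : (p.1.1 : ℕ) ^ 2 * p.1.2 = n := by simpa using congrArg PNat.val h2
  show h (p.1.1 : ℕ) ((n : ℕ) / (p.1.1 : ℕ) ^ 2) = _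
  rw [← h3, Nat.mul_div_cancel_left _ (pow_pos p.1.1.pos 2)]

lemma summable_pnat_inv_pow (p : ℕ) (hp : 1 < p) : Summable fun n : ℕ+ => ((n : ℝ) ^ p)⁻¹ :=
  (summable_pnat_iff_summable_nat (f := fun n : ℕ => ((n : ℝ) ^ p)⁻¹)).mpr
    (Real.summable_nat_pow_inv.mpr hp)

lemma summable_pnat_inv_rpow (p : ℝ) (hp : 1 < p) : Summable fun n : ℕ+ => ((n : ℝ) ^ p)⁻¹ :=
  (summable_pnat_iff_summable_nat (f := fun n : ℕ => ((n : ℝ) ^ p)⁻¹)).mpr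
    (Real.summable_nat_rpow_inv.mpr hp)

lemma summable_two : Summable fun p : ℕ+ × ℕ+ => ((p.1 : ℝ) ^ 2)⁻¹ * ((p.2 : ℝ) ^ 2)⁻¹ :=
  Summable.mul_of_nonneg (f := fun n : ℕ+ => ((n : ℝ) ^ 2)⁻¹) (g := fun n : ℕ+ => ((n : ℝ) ^ 2)⁻¹)
    (summable_pnat_inv_pow 2 (by norm_num)) (summable_pnat_inv_pow 2 (by norm_num))
    (fun _ => by positivity) (fun _ => by positivity)

lemma pow_mul_exp_le (i p : ℕ) (x : ℝ) (hx : 0 < x) :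
    x ^ i * Real.exp (-x) ≤ ((i + p).factorial : ℝ) * (x ^ p)⁻¹ := by
  have h := Real.pow_div_factorial_le_exp x hx.le (i + p)
  rw [Real.exp_neg]
  have f : (0 : ℝ) < ((i + p).factorial : ℝ) := by exact_mod_cast Nat.factorial_pos _
  rw [div_le_iff₀ f, pow_add] at h
  rw [← div_eq_mul_inv, ← div_eq_mul_inv, div_le_div_iff₀ (Real.exp_pos x) (by positivity)]
  linarith

lemma S1 (m : ℕ) (β : ℝ) (hβ : 0 < β) : Summable fun p : ℕ+ × ℕ+ =>
    (p.1 : ℝ) ^ (2 * m) / √(p.2 : ℝ) * Real.exp (-((p.1 : ℝ) * √((p.2 : ℝ) * β))) := by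
  refine Summable.of_nonneg_of_le (fun p => by positivity) (fun p => ?_)
    (summable_two.mul_left (((2 * m + 4).factorial : ℝ) * (β ^ (m + 2))⁻¹))
  obtain ⟨j, k⟩ := p
  simp only
  have hj : (1 : ℝ) ≤ (j : ℝ) := by exact_mod_cast j.pos
  have hk : (1 : ℝ) ≤ (k : ℝ) := by exact_mod_cast k.pos
  have h0 := pow_mul_exp_le 0 (2 * m + 4) ((j : ℝ) * √((k : ℝ) * β)) (by positivity)
  rw [pow_zero, one_mul, zero_add] at h0
  have h1 : ((j : ℝ) * √((k : ℝ) * β)) ^ (2 * m + 4) = (j : ℝ) ^ (2 * m + 4) * ((k : ℝ) * β) ^ (m + 2) := by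
    rw [mul_pow, show 2 * m + 4 = 2 * (m + 2) by ring, pow_mul (√_), Real.sq_sqrt (by positivity)]
  rw [h1] at h0
  have h2 : (j : ℝ) ^ (2 * m) / √(k : ℝ) ≤ (j : ℝ) ^ (2 * m) := by
    apply div_le_self (by positivity)
    exact Real.one_le_sqrt.mpr hk
  calc _ ≤ (j : ℝ) ^ (2 * m) * (((2 * m + 4).factorial : ℝ) * ((j : ℝ) ^ (2 * m + 4) * ((k : ℝ) * β) ^ (m + 2))⁻¹) :=
        mul_le_mul h2 h0 (by positivity) (by positivity)
    _ = ((2 * m + 4).factorial : ℝ) * (β ^ (m + 2))⁻¹ * (((j : ℝ) ^ 4)⁻¹ * ((k : ℝ) ^ (m + 2))⁻¹) := by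
        rw [pow_add, mul_pow]
        field_simp
    _ ≤ _ := by
        have := pow_le_pow_right₀ hj (show 2 ≤ 4 by norm_num)
        have := pow_le_pow_right₀ hk (show 2 ≤ m + 2 by omega)
        gcongr

lemma S2 (m : ℕ) (α : ℝ) (hα : 0 < α) : Summable fun p : ℕ+ × ℕ+ =>
    (p.2 : ℂ) ^ m * F11 ((m : ℂ) + 1 / 2) (1 / 2) (-(((p.2 : ℝ) * (p.1 : ℝ) ^ 2) * α : ℝ)) := by
  simp_rw [F11_eq, Finset.sum_mul, Finset.mul_sum]
  refine summable_sum fun i _ => ?_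
  set c : ℂ := (Nat.choose m i : ℂ) / poch (1 / 2) i
  refine Summable.of_norm_bounded
    (summable_two.mul_left (‖c‖ * (((i + (m + 2)).factorial : ℝ) * (α ^ (m + 2))⁻¹))) (fun p => ?_)
  obtain ⟨l, n⟩ := p
  have hl : (1 : ℝ) ≤ (l : ℝ) := by exact_mod_cast l.pos
  have hn : (1 : ℝ) ≤ (n : ℝ) := by exact_mod_cast n.pos
  simp only
  have h0 := pow_mul_exp_le i (m + 2) ((n : ℝ) * (l : ℝ) ^ 2 * α) (by positivity)
  rw [norm_mul, norm_mul, norm_mul, norm_pow, norm_pow, norm_neg, Complex.norm_real,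
    ← Complex.ofReal_neg, Complex.norm_exp_ofReal, Complex.norm_natCast, Real.norm_of_nonneg (by positivity)]
  calc _ = ‖c‖ * ((n : ℝ) ^ m * (((n : ℝ) * (l : ℝ) ^ 2 * α) ^ i * Real.exp (-((n : ℝ) * (l : ℝ) ^ 2 * α)))) := by ring
    _ ≤ ‖c‖ * ((n : ℝ) ^ m * (((i + (m + 2)).factorial : ℝ) * (((n : ℝ) * (l : ℝ) ^ 2 * α) ^ (m + 2))⁻¹)) := by gcongr
    _ = ‖c‖ * (((i + (m + 2)).factorial : ℝ) * (α ^ (m + 2))⁻¹) * (((l : ℝ) ^ (2 * m + 4))⁻¹ * ((n : ℝ) ^ 2)⁻¹) := by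
        rw [mul_pow, mul_pow, pow_add (n : ℝ) m 2]
        field_simp
        ring
    _ ≤ _ := by
        have := pow_le_pow_right₀ hl (show 2 ≤ 2 * m + 4 by omega)
        gcongr

/-- The rational function. -/
noncomputable def Rf (m : ℕ) (β : ℝ) (k l : ℂ) : ℂ :=
  Spoly m (-16 * π ^ 2 * l ^ 2) (4 * π ^ 2 * l ^ 2 + 2 * I * β * k) /
    (4 * π ^ 2 * l ^ 2 + 2 * I * β * k) ^ (2 * m + 1)

lemma Rf_expand (m : ℕ) (β : ℝ) (k l : ℂ) (hD : 4 * π ^ 2 * l ^ 2 + 2 * I * β * k ≠ 0) :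
    Rf m β k l = ∑ i ∈ Finset.range (m + 1), (Nat.choose (m + i) (2 * i) : ℂ) *
      (-16 * π ^ 2 * l ^ 2) ^ i * ((4 * π ^ 2 * l ^ 2 + 2 * I * β * k) ^ (m + i + 1))⁻¹ := by
  unfold Rf Spoly
  rw [Finset.sum_div]
  refine Finset.sum_congr rfl fun i hi => ?_
  rw [Finset.mem_range] at hi
  generalize 4 * (π : ℂ) ^ 2 * l ^ 2 + 2 * I * β * k = D at *
  rw [show 2 * m + 1 = (m - i) + (m + i + 1) by omega, pow_add]
  field_simp

lemma Rf_norm (m : ℕ) (hm : 0 < m) (β : ℝ) (hβ : 0 < β) (k : ℝ) (l : ℕ+) :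
    4 * (π : ℂ) ^ 2 * (l : ℂ) ^ 2 + 2 * I * β * k ≠ 0 ∧ (k ≠ 0 →
    ‖Rf m β k l‖ ≤ (∑ i ∈ Finset.range (m + 1), (Nat.choose (m + i) (2 * i) : ℝ) * 4 ^ i) *
      (((l : ℝ) ^ (3 / 2 : ℝ))⁻¹ * ((2 * β * |k|) ^ (5 / 4 : ℝ))⁻¹)) := by
  have hl : (1 : ℝ) ≤ (l : ℝ) := by exact_mod_cast l.pos
  set D : ℂ := 4 * (π : ℂ) ^ 2 * (l : ℂ) ^ 2 + 2 * I * β * k with hDdef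
  have hDe : D = ((4 * π ^ 2 * (l : ℝ) ^ 2 : ℝ) : ℂ) + ((2 * β * k : ℝ) : ℂ) * I := by
    rw [hDdef]; push_cast; ring
  have hre : D.re = 4 * π ^ 2 * (l : ℝ) ^ 2 := by rw [hDe, Complex.add_re, Complex.ofReal_re, Complex.re_ofReal_mul, Complex.I_re]; ring
  have him : D.im = 2 * β * k := by rw [hDe, Complex.add_im, Complex.ofReal_im, Complex.im_ofReal_mul, Complex.I_im]; ring
  have h1 : 4 * π ^ 2 * (l : ℝ) ^ 2 ≤ ‖D‖ := hre ▸ Complex.re_le_norm D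
  have h2 : 2 * β * |k| ≤ ‖D‖ := by
    have := Complex.abs_im_le_norm D
    rwa [him, abs_mul, abs_of_pos (by positivity)] at this
  have hpi := Real.pi_gt_three
  have h3 : (l : ℝ) ^ 2 ≤ ‖D‖ := by
    refine le_trans ?_ h1
    have : (1 : ℝ) ≤ 4 * π ^ 2 := by nlinarith
    nlinarith [sq_nonneg (l : ℝ)]
  have h4 : 1 ≤ ‖D‖ := by nlinarith
  have hD0 : D ≠ 0 := by
    intro h; rw [h, norm_zero] at h4; linarith
  refine ⟨hD0, fun hk => ?_⟩
  rw [Rf_expand m β k l hD0, ← hDdef]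
  have h5 : (‖D‖ ^ (m + 1))⁻¹ ≤ ((l : ℝ) ^ (3 / 2 : ℝ))⁻¹ * ((2 * β * |k|) ^ (5 / 4 : ℝ))⁻¹ := by
    have hk' : 0 < |k| := abs_pos.mpr hk
    rw [← mul_inv]
    apply inv_anti₀ (by positivity)
    calc (l : ℝ) ^ (3 / 2 : ℝ) * (2 * β * |k|) ^ (5 / 4 : ℝ)
        = ((l : ℝ) ^ 2) ^ (3 / 4 : ℝ) * (2 * β * |k|) ^ (5 / 4 : ℝ) := by
          rw [← Real.rpow_natCast (l : ℝ) 2, ← Real.rpow_mul (by positivity)]; norm_num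
      _ ≤ ‖D‖ ^ (3 / 4 : ℝ) * ‖D‖ ^ (5 / 4 : ℝ) := by gcongr
      _ = ‖D‖ ^ 2 := by
          rw [← Real.rpow_add (by linarith)]; norm_num
      _ ≤ ‖D‖ ^ (m + 1) := pow_le_pow_right₀ h4 (by omega)
  refine le_trans ?_ (mul_le_mul_of_nonneg_left h5 (Finset.sum_nonneg fun i _ => by positivity))
  rw [Finset.sum_mul]
  refine (norm_sum_le _ _).trans (Finset.sum_le_sum fun i _ => ?_)
  rw [norm_mul, norm_mul, norm_pow, norm_inv, norm_pow, Complex.norm_natCast]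
  have h6 : ‖(-16 * (π : ℂ) ^ 2 * (l : ℂ) ^ 2)‖ ≤ 4 * ‖D‖ := by
    rw [show (-16 * (π : ℂ) ^ 2 * (l : ℂ) ^ 2) = -((16 * π ^ 2 * (l : ℝ) ^ 2 : ℝ) : ℂ) by push_cast; ring,
      norm_neg, Complex.norm_real, Real.norm_of_nonneg (by positivity)]
    linarith
  calc _ ≤ (Nat.choose (m + i) (2 * i) : ℝ) * (4 * ‖D‖) ^ i * (‖D‖ ^ (m + i + 1))⁻¹ := by gcongr
    _ = _ := by
      rw [show m + i + 1 = i + (m + 1) by ring, pow_add, mul_pow]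
      field_simp

lemma S3 (m : ℕ) (hm : 0 < m) (β : ℝ) (hβ : 0 < β) :
    Summable fun p : ℕ+ × ℕ+ => Rf m β (p.1 : ℂ) (p.2 : ℂ) + Rf m β (-(p.1 : ℂ)) (p.2 : ℂ) := by
  have hb : Summable fun p : ℕ+ × ℕ+ => ((p.1 : ℝ) ^ (5 / 4 : ℝ))⁻¹ * ((p.2 : ℝ) ^ (3 / 2 : ℝ))⁻¹ :=
    Summable.mul_of_nonneg (f := fun n : ℕ+ => ((n : ℝ) ^ (5 / 4 : ℝ))⁻¹) (g := fun n : ℕ+ => ((n : ℝ) ^ (3 / 2 : ℝ))⁻¹)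
    (summable_pnat_inv_rpow _ (by norm_num)) (summable_pnat_inv_rpow _ (by norm_num))
    (fun _ => by positivity) (fun _ => by positivity)
  set C : ℝ := ∑ i ∈ Finset.range (m + 1), (Nat.choose (m + i) (2 * i) : ℝ) * 4 ^ i
  have hb2 := hb.mul_left (C * ((2 * β) ^ (5 / 4 : ℝ))⁻¹)
  have key : ∀ (s : ℝ), |s| = 1 → Summable fun p : ℕ+ × ℕ+ => Rf m β (s * (p.1 : ℂ)) (p.2 : ℂ) := by
    intro s hs
    refine Summable.of_norm_bounded hb2 (fun p => ?_)
    obtain ⟨k, l⟩ := p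
    have hk : (0 : ℝ) < (k : ℝ) := by exact_mod_cast k.pos
    have hs0 : s ≠ 0 := by intro h; simp [h] at hs
    have := (Rf_norm m hm β hβ (s * k) l).2 (mul_ne_zero hs0 hk.ne')
    push_cast at this
    refine this.trans (le_of_eq ?_)
    rw [abs_mul, hs, one_mul, abs_of_pos hk, Real.mul_rpow (by positivity) hk.le, mul_inv]
    ring
  have k1 := key 1 (by simp)
  have k2 := key (-1) (by simp)
  simp only [ofReal_one, one_mul, ofReal_neg, neg_mul] at k1 k2
  exact k1.add k2

/-- The summand of the left-hand side. -/
noncomputable def uf (m : ℕ) (β : ℝ) (j k : ℕ) : ℝ :=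
  (j : ℝ) ^ (2 * m) / √(k : ℝ) * Real.exp (-((j : ℝ) * √((k : ℝ) * β))) *
    Real.sin (π / 4 - (j : ℝ) * √((k : ℝ) * β))

lemma uf_summable (m : ℕ) (β : ℝ) (hβ : 0 < β) :
    Summable fun p : ℕ+ × ℕ+ => ((uf m β p.1 p.2 : ℝ) : ℂ) := by
  refine Summable.of_norm_bounded (S1 m β hβ) fun p => ?_
  rw [Complex.norm_real, uf, norm_mul, Real.norm_of_nonneg (by positivity)]
  exact mul_le_of_le_one_right (by positivity) (Real.abs_sin_le_one _)

lemma uf_im (m : ℕ) (β : ℝ) (j k : ℕ) :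
    uf m β j k = ((1 + I) / (√2 : ℝ) / (√(k : ℝ) : ℝ) *
      ((j : ℂ) ^ (2 * m) * cexp (-((j : ℂ) * ((√((k : ℝ) * β) : ℝ) * (1 + I)))))).im := by
  have h : cexp (-((j : ℂ) * ((√((k : ℝ) * β) : ℝ) * (1 + I)))) =
      ((Real.exp (-((j : ℝ) * √((k : ℝ) * β))) : ℝ) : ℂ) *
      (((Real.cos ((j : ℝ) * √((k : ℝ) * β)) : ℝ) : ℂ) - ((Real.sin ((j : ℝ) * √((k : ℝ) * β)) : ℝ) : ℂ) * I) := by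
    rw [show -((j : ℂ) * ((√((k : ℝ) * β) : ℝ) * (1 + I))) =
      ((-((j : ℝ) * √((k : ℝ) * β)) : ℝ) : ℂ) + ((-((j : ℝ) * √((k : ℝ) * β)) : ℝ) : ℂ) * I by push_cast; ring,
      Complex.exp_add, Complex.exp_mul_I, ← Complex.ofReal_cos, ← Complex.ofReal_sin, Real.cos_neg, Real.sin_neg,
      ← Complex.ofReal_exp]
    push_cast; ring
  rw [h]
  have h2 : ∀ (A E c s r q : ℝ), ((1 + I) / (r : ℂ) / (q : ℂ) * ((A : ℂ) * ((E : ℂ) * ((c : ℂ) - (s : ℂ) * I)))).im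
      = A / q * E * (c - s) / r := by
    intro A E c s r q
    rw [show (1 + I) / (r : ℂ) / (q : ℂ) * ((A : ℂ) * ((E : ℂ) * ((c : ℂ) - (s : ℂ) * I)))
      = ((A / q * E / r : ℝ) : ℂ) * (((c + s : ℝ) : ℂ) + ((c - s : ℝ) : ℂ) * I) by
        push_cast
        rw [show (1 + I) / (r : ℂ) / (q : ℂ) * ((A : ℂ) * ((E : ℂ) * ((c : ℂ) - (s : ℂ) * I)))
          = (A / q * E / r : ℂ) * ((1 + I) * (c - s * I)) by ring]
        congr 1
        linear_combination (-(s : ℂ)) * I_sq]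
    rw [Complex.im_ofReal_mul, Complex.add_im, Complex.ofReal_im, Complex.im_ofReal_mul, Complex.I_im]
    ring
  rw [show ((j : ℂ) ^ (2 * m)) = (((j : ℝ) ^ (2 * m) : ℝ) : ℂ) by push_cast; rfl, h2, uf,
    Real.sin_sub, Real.cos_pi_div_four, Real.sin_pi_div_four]
  have : √2 / 2 = 1 / √2 := by
    rw [div_eq_div_iff (by norm_num) (by positivity), Real.mul_self_sqrt (by norm_num)]; norm_num
  rw [this]
  ring

lemma Rf_conj (m : ℕ) (β : ℝ) (k l : ℕ) :
    (starRingEnd ℂ) (Rf m β k l) = Rf m β (-(k : ℂ)) l := by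
  have h16 : (starRingEnd ℂ) 16 = 16 := map_ofNat _ 16
  have h4 : (starRingEnd ℂ) 4 = 4 := map_ofNat _ 4
  have h2 : (starRingEnd ℂ) 2 = 2 := map_ofNat _ 2
  unfold Rf Spoly
  simp [map_sum, h16, h4, h2]

lemma bracket_eq (m : ℕ) (β : ℝ) (hβ : 0 < β) (k l : ℕ+) :
    (1 + I) / (√2 : ℝ) / (√(k : ℝ) : ℝ) *
     (((((√((k : ℝ) * β) : ℝ) * (1 + I) : ℂ) + 2 * π * I * l) ^ (2 * m + 1))⁻¹ +
      ((((√((k : ℝ) * β) : ℝ) * (1 + I) : ℂ) - 2 * π * I * l) ^ (2 * m + 1))⁻¹)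
    = 2 * I * (√(2 * β) : ℝ) * Rf m β k l := by
  have hk : (0 : ℝ) < (k : ℝ) := by exact_mod_cast k.pos
  have hl : (0 : ℝ) < (l : ℝ) := by exact_mod_cast l.pos
  have hs : ((√((k : ℝ) * β) : ℝ) : ℂ) ^ 2 = k * β := by
    rw [← Complex.ofReal_pow, Real.sq_sqrt (by positivity)]; push_cast; rfl
  set a : ℂ := (√((k : ℝ) * β) : ℝ) * (1 + I) with ha
  set c : ℂ := 2 * π * I * l with hc
  have ha2 : a ^ 2 = 2 * I * β * k := by
    rw [ha, mul_pow, hs]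
    linear_combination (k * β : ℂ) * I_sq
  have hc2 : c ^ 2 = -4 * π ^ 2 * l ^ 2 := by
    rw [hc]; linear_combination (4 * π ^ 2 * l ^ 2 : ℂ) * I_sq
  have hD : a ^ 2 - c ^ 2 = 4 * π ^ 2 * l ^ 2 + 2 * I * β * k := by rw [ha2, hc2]; ring
  have hre : a.re = √((k : ℝ) * β) := by rw [ha, Complex.re_ofReal_mul]; simp
  have hcre : c.re = 0 := by rw [hc]; simp
  have hpos : 0 < √((k : ℝ) * β) := by positivity
  have h1 : a + c ≠ 0 := by
    intro h; have := congrArg Complex.re h; rw [Complex.add_re, hre, hcre] at this; rw [Complex.zero_re] at this; linarith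
  have h2 : a - c ≠ 0 := by
    intro h; have := congrArg Complex.re h; rw [Complex.sub_re, hre, hcre] at this; rw [Complex.zero_re] at this; linarith
  have hST := (ST_closed m a c).1
  have hb : ((a + c) ^ (2 * m + 1))⁻¹ + ((a - c) ^ (2 * m + 1))⁻¹ = 2 * a * Rf m β k l := by
    unfold Rf
    rw [← hD, show (-16 * (π : ℂ) ^ 2 * (l : ℂ) ^ 2) = 4 * c ^ 2 by rw [hc2]; ring]
    rw [← mul_div_assoc, ← hST, show a ^ 2 - c ^ 2 = (a + c) * (a - c) by ring, mul_pow]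
    field_simp
    ring
  rw [hb]
  have e1 : ((√((k : ℝ) * β) : ℝ) : ℂ) = (√(k : ℝ) : ℝ) * (√β : ℝ) := by
    rw [Real.sqrt_mul hk.le]; push_cast; rfl
  have e2 : ((√(2 * β) : ℝ) : ℂ) = (√2 : ℝ) * (√β : ℝ) := by
    rw [Real.sqrt_mul (by norm_num)]; push_cast; rfl
  have n1 : ((√(k : ℝ) : ℝ) : ℂ) ≠ 0 := by exact_mod_cast (Real.sqrt_pos.mpr hk).ne'
  have n2 : ((√2 : ℝ) : ℂ) ≠ 0 := by exact_mod_cast (Real.sqrt_pos.mpr (by norm_num : (0:ℝ) < 2)).ne'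
  have e3 : ((√2 : ℝ) : ℂ) ^ 2 = 2 := by rw [← Complex.ofReal_pow, Real.sq_sqrt (by norm_num)]; norm_num
  rw [ha, e1, e2]
  field_simp
  rw [e3]
  linear_combination ((√β : ℝ) * Rf m β k l) * I_sq

lemma zero_term (m : ℕ) (β : ℝ) (hβ : 0 < β) (k : ℕ+) :
    ((1 + I) / (√2 : ℝ) / (√(k : ℝ) : ℝ) *
     (((√((k : ℝ) * β) : ℝ) * (1 + I) : ℂ) ^ (2 * m + 1))⁻¹).im
    = - (Real.sin (π * m / 2) * (2 * β) ^ (-((m : ℝ) + 1 / 2))) * ((k : ℝ) ^ (m + 1))⁻¹ := by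
  have hk : (0 : ℝ) < (k : ℝ) := by exact_mod_cast k.pos
  have e0 : (2 * β) ^ (-((m : ℝ) + 1 / 2)) = ((2 * β) ^ m * (√2 * √β))⁻¹ := by
    rw [Real.rpow_neg (by positivity), Real.rpow_add (by positivity), Real.rpow_natCast, ← Real.sqrt_eq_rpow,
      Real.sqrt_mul (by norm_num)]
  have e1 : ((√((k : ℝ) * β) : ℝ) : ℂ) = (√(k : ℝ) : ℝ) * (√β : ℝ) := by
    rw [Real.sqrt_mul hk.le]; push_cast; rfl
  have hs : ((√((k : ℝ) * β) : ℝ) : ℂ) ^ 2 = ((k * β : ℝ) : ℂ) := by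
    rw [← Complex.ofReal_pow, Real.sq_sqrt (by positivity)]
  have h1I : (1 + I : ℂ) ≠ 0 := by
    intro h; have := congrArg Complex.re h; simp at this
  have hI2 : (1 + I : ℂ) ^ 2 = 2 * I := by linear_combination I_sq
  have key : (1 + I) / (√2 : ℝ) / (√(k : ℝ) : ℝ) *
     (((√((k : ℝ) * β) : ℝ) * (1 + I) : ℂ) ^ (2 * m + 1))⁻¹
     = ((((2 * β) ^ m * (√2 * √β))⁻¹ * ((k : ℝ) ^ (m + 1))⁻¹ : ℝ) : ℂ) * (-I) ^ m := by
    rw [pow_succ, pow_mul, mul_pow _ (1 + I), hs, hI2, e1]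
    have : (-I : ℂ) ^ m = (I ^ m)⁻¹ := by rw [← Complex.inv_I, inv_pow]
    rw [this]
    have n1 : ((√(k : ℝ) : ℝ) : ℂ) ≠ 0 := by exact_mod_cast (Real.sqrt_pos.mpr hk).ne'
    have n2 : ((√2 : ℝ) : ℂ) ≠ 0 := by exact_mod_cast (Real.sqrt_pos.mpr (by norm_num : (0:ℝ) < 2)).ne'
    have n3 : ((√β : ℝ) : ℂ) ≠ 0 := by exact_mod_cast (Real.sqrt_pos.mpr hβ).ne'
    have n4 : (β : ℂ) ≠ 0 := by exact_mod_cast hβ.ne'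
    have n5 : (k : ℂ) ≠ 0 := by exact_mod_cast k.ne_zero
    have e4 : ((√(k : ℝ) : ℝ) : ℂ) ^ 2 = k := by rw [← Complex.ofReal_pow, Real.sq_sqrt hk.le]; simp
    push_cast
    simp only [mul_pow, pow_succ (k : ℂ) m]
    field_simp
    rw [e4]
  rw [key, Complex.im_ofReal_mul, e0]
  have : (-I : ℂ) ^ m = cexp (((-(π * m / 2) : ℝ) : ℂ) * I) := by
    rw [← Complex.exp_neg_pi_div_two_mul_I, ← Complex.exp_nat_mul]
    congr 1
    push_cast; ring
  rw [this, Complex.exp_ofReal_mul_I_im, Real.sin_neg]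
  ring

lemma L2 (m : ℕ) (hm : 0 < m) (β : ℝ) (hβ : 0 < β) (k : ℕ+) :
    ∑' j : ℕ+, ((uf m β j k : ℝ) : ℂ) =
      -(((Nat.factorial (2 * m) : ℝ) * Real.sin (π * m / 2) * (2 * β) ^ (-((m : ℝ) + 1 / 2)) : ℝ) : ℂ) *
        ((k : ℂ) ^ (m + 1))⁻¹ +
      ((2 * m).factorial : ℂ) * (√(2 * β) : ℝ) * ∑' l : ℕ+, (Rf m β k l + Rf m β (-(k : ℂ)) l) := by
  have hk : (0 : ℝ) < (k : ℝ) := by exact_mod_cast k.pos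
  have hpos : 0 < √((k : ℝ) * β) := by positivity
  set a : ℂ := (√((k : ℝ) * β) : ℝ) * (1 + I) with ha
  have hre : a.re = √((k : ℝ) * β) := by rw [ha, Complex.re_ofReal_mul]; simp
  have hL := Lip (2 * m) (by omega) a (by rw [hre]; exact hpos)
  set w : ℂ := (1 + I) / (√2 : ℝ) / (√(k : ℝ) : ℝ) with hw
  have hsum : Summable fun j : ℕ+ => w * ((j : ℂ) ^ (2 * m) * cexp (-((j : ℂ) * a))) := by
    apply Summable.mul_left
    have h := ((S1 m β hβ).prod_symm.prod_factor k).mul_left (√(k : ℝ))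
    refine Summable.of_norm_bounded h fun j => ?_
    rw [norm_mul, norm_pow, Complex.norm_natCast, Complex.norm_exp]
    have : (-((j : ℂ) * a)).re = -((j : ℝ) * √((k : ℝ) * β)) := by
      rw [Complex.neg_re, ← hre]
      simp
    rw [this]
    simp only [Prod.swap]
    apply le_of_eq
    field_simp
  have hu : ∀ j : ℕ+, uf m β j k = (w * ((j : ℂ) ^ (2 * m) * cexp (-((j : ℂ) * a)))).im :=
    fun j => uf_im m β j k
  have hLs := Lip_summable (2 * m) (by omega) a
  rw [tsum_int_eq_zero_add_tsum_pnat hLs] at hL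
  have hLp : Summable fun l : ℕ+ => ((a + 2 * π * I * ((l : ℤ) : ℂ)) ^ (2 * m + 1))⁻¹ :=
    hLs.comp_injective (fun x y h => by simpa using h)
  have hLn : Summable fun l : ℕ+ => ((a + 2 * π * I * ((-(l : ℤ) : ℤ) : ℂ)) ^ (2 * m + 1))⁻¹ :=
    hLs.comp_injective (i := fun l : ℕ+ => -(l : ℤ)) (fun x y h => by simpa using h)
  rw [add_assoc, ← hLp.tsum_add hLn] at hL
  have hbr : ∀ l : ℕ+, w * (((a + 2 * π * I * ((l : ℤ) : ℂ)) ^ (2 * m + 1))⁻¹ + ((a + 2 * π * I * ((-(l : ℤ) : ℤ) : ℂ)) ^ (2 * m + 1))⁻¹) = 2 * I * (√(2 * β) : ℝ) * Rf m β k l := by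
    intro l
    rw [← bracket_eq m β hβ k l]
    push_cast
    rw [mul_neg, ← sub_eq_add_neg]
  have hW : ∑' j : ℕ+, w * ((j : ℂ) ^ (2 * m) * cexp (-((j : ℂ) * a))) =
      (((2 * m).factorial : ℝ) : ℂ) * (w * (a ^ (2 * m + 1))⁻¹ + ((2 * √(2 * β) : ℝ) : ℂ) * (I * ∑' l : ℕ+, Rf m β k l)) := by
    rw [tsum_mul_left, hL]
    rw [mul_left_comm, mul_add, ← tsum_mul_left (a := w)]
    simp_rw [hbr]
    rw [tsum_mul_left]
    push_cast
    simp only [mul_zero, add_zero]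
    ring
  have h3 : ∑' j : ℕ+, ((uf m β j k : ℝ) : ℂ) = (((∑' j : ℕ+, w * ((j : ℂ) ^ (2 * m) * cexp (-((j : ℂ) * a)))).im : ℝ) : ℂ) := by
    rw [Complex.im_tsum hsum, Complex.ofReal_tsum]
    simp_rw [hu]
  have h4 : ∑' l : ℕ+, (Rf m β k l + Rf m β (-(k : ℂ)) l) = ((2 * (∑' l : ℕ+, Rf m β k l).re : ℝ) : ℂ) := by
    have hRs : Summable fun l : ℕ+ => Rf m β k l := by
      have h2 : Summable fun l : ℕ+ => 2 * I * (√(2 * β) : ℝ) * Rf m β k l := by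
        simp_rw [← hbr]
        exact (hLp.add hLn).mul_left w
      refine (summable_mul_left_iff ?_).mp h2
      have : (√(2 * β) : ℝ) ≠ 0 := by positivity
      have h7 : ((√(2 * β) : ℝ) : ℂ) ≠ 0 := by exact_mod_cast this
      exact mul_ne_zero (mul_ne_zero two_ne_zero Complex.I_ne_zero) h7
    rw [← Complex.add_conj, Complex.conj_tsum]
    simp_rw [← Rf_conj]
    rw [hRs.tsum_add]
    exact (Complex.summable_conj).mpr hRs
  rw [h3, hW, Complex.im_ofReal_mul, Complex.add_im, Complex.im_ofReal_mul, Complex.I_mul_im, hw, ha, zero_term m β hβ k, h4]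
  push_cast
  ring

lemma summable_pow_cexp (q : ℕ) (r : ℝ) (hr : 0 < r) :
    Summable fun n : ℕ+ => (n : ℂ) ^ q * cexp (-(n * (r : ℂ))) := by
  have h := (summable_pnat_iff_summable_nat (f := fun n : ℕ => (n : ℝ) ^ q * Real.exp (-r * n))).mpr
    (Real.summable_pow_mul_exp_neg_nat_mul q hr)
  refine Summable.of_norm_bounded h fun n => ?_
  rw [norm_mul, norm_pow, Complex.norm_natCast, Complex.norm_exp]
  apply le_of_eq
  congr 2
  simp [mul_comm]

lemma L4a (m : ℕ) (hm : 0 < m) (α β : ℝ) (hα : 0 < α) (hβ : 0 < β) (hαβ : α * β = 4 * π ^ 3) (l : ℕ+) :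
    (Summable fun k : ℤ => Rf m β k l) ∧
    ∑' k : ℤ, Rf m β k l = ((π : ℂ) / β) ^ (m + 1) / (m.factorial : ℂ) *
      ∑' n : ℕ+, (n : ℂ) ^ m * F11 ((m : ℂ) + 1 / 2) (1 / 2) (-(((n : ℝ) * (l : ℝ) ^ 2) * α : ℝ)) := by
  have hl : (0 : ℝ) < (l : ℝ) := by exact_mod_cast l.pos
  have hpi : (π : ℂ) ≠ 0 := by exact_mod_cast Real.pi_ne_zero
  have hb : (β : ℂ) ≠ 0 := by exact_mod_cast hβ.ne'
  have hab : (α : ℂ) * β = 4 * π ^ 3 := by exact_mod_cast congrArg (Complex.ofReal) hαβ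
  set r : ℝ := α * (l : ℝ) ^ 2 with hr
  have hr0 : 0 < r := by positivity
  have hD : ∀ k : ℤ, 4 * (π : ℂ) ^ 2 * (l : ℂ) ^ 2 + 2 * I * β * k = (β / π) * ((r : ℂ) + 2 * π * I * k) := by
    intro k
    rw [hr]
    push_cast
    field_simp
    linear_combination (-(l : ℂ) ^ 2) * hab
  have hR : ∀ k : ℤ, Rf m β k l = ∑ i ∈ Finset.range (m + 1), ((Nat.choose (m + i) (2 * i) : ℂ) *
      (-16 * π ^ 2 * l ^ 2) ^ i * (π / β) ^ (m + i + 1)) * (((r : ℂ) + 2 * π * I * k) ^ (m + i + 1))⁻¹ := by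
    intro k
    have h0 := (Rf_norm m hm β hβ k l).1
    rw [Complex.ofReal_intCast] at h0
    rw [Rf_expand m β k l h0]
    refine Finset.sum_congr rfl fun i _ => ?_
    rw [hD, mul_pow ((β : ℂ) / π), mul_inv, ← inv_pow ((β : ℂ) / π), inv_div]
    ring
  have hs : ∀ i : ℕ, Summable fun k : ℤ => (((r : ℂ) + 2 * π * I * k) ^ (m + i + 1))⁻¹ :=
    fun i => Lip_summable (m + i) (by omega) _
  have hfun : (fun k : ℤ => Rf m β k l) = fun k : ℤ => ∑ i ∈ Finset.range (m + 1), ((Nat.choose (m + i) (2 * i) : ℂ) *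
      (-16 * π ^ 2 * l ^ 2) ^ i * (π / β) ^ (m + i + 1)) * (((r : ℂ) + 2 * π * I * k) ^ (m + i + 1))⁻¹ := funext hR
  rw [hfun]
  refine ⟨summable_sum fun i _ => (hs i).mul_left _, ?_⟩
  rw [Summable.tsum_finsetSum (fun i _ => (hs i).mul_left _)]
  simp_rw [tsum_mul_left]
  have hLip : ∀ i : ℕ, ∑' k : ℤ, (((r : ℂ) + 2 * π * I * k) ^ (m + i + 1))⁻¹ =
      (((m + i).factorial : ℂ))⁻¹ * ∑' n : ℕ+, (n : ℂ) ^ (m + i) * cexp (-(n * (r : ℂ))) := by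
    intro i
    have f : ((m + i).factorial : ℂ) ≠ 0 := by exact_mod_cast Nat.factorial_ne_zero _
    rw [Lip (m + i) (by omega) r (by simpa using hr0), inv_mul_cancel_left₀ f]
  simp_rw [hLip, ← tsum_mul_left]
  rw [← Summable.tsum_finsetSum (fun i _ => ((summable_pow_cexp (m + i) r hr0).mul_left _).mul_left _)]
  refine tsum_congr fun n => ?_
  rw [F11_eq', Finset.mul_sum, Finset.sum_mul, Finset.mul_sum, Finset.mul_sum]
  refine Finset.sum_congr rfl fun i _ => ?_
  have e1 : cexp (-(((n : ℝ) * (l : ℝ) ^ 2) * α : ℝ)) = cexp (-(n * (r : ℂ))) := by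
    congr 1; rw [hr]; push_cast; ring
  rw [e1]
  have f : (m.factorial : ℂ) ≠ 0 := by exact_mod_cast Nat.factorial_ne_zero _
  have e2 : (4 * (-(((n : ℝ) * (l : ℝ) ^ 2) * α : ℝ) : ℂ)) ^ i = (-16 * π ^ 2 * l ^ 2 : ℂ) ^ i * (π / β) ^ i * n ^ i := by
    rw [← mul_pow, ← mul_pow]
    congr 1
    push_cast
    field_simp
    linear_combination (-4 : ℂ) * hab
  rw [e2, show m + i + 1 = (m + 1) + i by ring, pow_add _ (m + 1) i, pow_add _ m i]
  field_simp

lemma Rf_zero (m : ℕ) (β : ℝ) (l : ℕ+) :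
    Rf m β 0 l = (-1) ^ m * (2 * m + 1) * ((4 * π ^ 2 : ℂ) ^ (m + 1))⁻¹ * ((l : ℂ) ^ (2 * m + 2))⁻¹ := by
  have hl : (l : ℂ) ≠ 0 := by exact_mod_cast l.ne_zero
  have hpi : (π : ℂ) ≠ 0 := by exact_mod_cast Real.pi_ne_zero
  have h : ∀ Y : ℂ, Spoly m (-4 * Y) Y = Y ^ m * Spoly m (-4) 1 := by
    intro Y
    unfold Spoly
    rw [Finset.mul_sum]
    refine Finset.sum_congr rfl fun i hi => ?_
    rw [Finset.mem_range] at hi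
    rw [mul_pow, one_pow]
    have : Y ^ m = Y ^ i * Y ^ (m - i) := by rw [← pow_add]; congr 1; omega
    rw [this]; ring
  unfold Rf
  rw [mul_zero, add_zero, show (-16 * (π : ℂ) ^ 2 * (l : ℂ) ^ 2) = -4 * (4 * π ^ 2 * l ^ 2) by ring, h, (ST_special m).1]
  rw [show 2 * m + 1 = m + (m + 1) by ring, pow_add _ m (m + 1), show 2 * m + 2 = 2 * (m + 1) by ring, pow_mul (l : ℂ), mul_pow _ ((l : ℂ) ^ 2) (m + 1)]
  field_simp

lemma L4 (m : ℕ) (hm : 0 < m) (α β : ℝ) (hα : 0 < α) (hβ : 0 < β) (hαβ : α * β = 4 * π ^ 3) (l : ℕ+) :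
    ∑' k : ℕ+, (Rf m β k l + Rf m β (-(k : ℂ)) l) = ((π : ℂ) / β) ^ (m + 1) / (m.factorial : ℂ) *
      ∑' n : ℕ+, (n : ℂ) ^ m * F11 ((m : ℂ) + 1 / 2) (1 / 2) (-(((n : ℝ) * (l : ℝ) ^ 2) * α : ℝ))
      - (-1) ^ m * (2 * m + 1) * ((4 * π ^ 2 : ℂ) ^ (m + 1))⁻¹ * ((l : ℂ) ^ (2 * m + 2))⁻¹ := by
  obtain ⟨hs, ht⟩ := L4a m hm α β hα hβ hαβ l
  rw [tsum_int_eq_zero_add_tsum_pnat hs, Int.cast_zero, Rf_zero] at ht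
  rw [← ht]
  have hp : Summable fun k : ℕ+ => Rf m β ((k : ℤ) : ℂ) l :=
    hs.comp_injective (fun x y h => by simpa using h)
  have hn : Summable fun k : ℕ+ => Rf m β ((-(k : ℤ) : ℤ) : ℂ) l :=
    hs.comp_injective (i := fun l : ℕ+ => -(l : ℤ)) (fun x y h => by simpa using h)
  have := hp.tsum_add hn
  push_cast at this ⊢
  rw [this]
  ring

lemma zeta_pnat (q : ℕ) (hq : 1 < q) : ∑' n : ℕ+, ((n : ℂ) ^ q)⁻¹ = riemannZeta q := by
  rw [zeta_nat_eq_tsum_of_gt_one hq, tsum_pnat_eq_tsum_of_eq_zero (f := fun n : ℕ => ((n : ℂ) ^ q)⁻¹)]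
  · simp
  · simp; omega

lemma summable_pnat_c (q : ℕ) (hq : 1 < q) : Summable fun n : ℕ+ => ((n : ℂ) ^ q)⁻¹ := by
  refine Summable.of_norm_bounded (summable_pnat_inv_pow q hq) fun n => ?_
  simp

lemma gamma_const (m : ℕ) : Real.Gamma ((m : ℝ) + 1 / 2) * (4 ^ m * (m.factorial : ℝ)) = ((2 * m).factorial : ℝ) * √π := by
  induction m with
  | zero => simp [Real.Gamma_one_half_eq, -one_div]
  | succ m ih =>
    rw [show ((m + 1 : ℕ) : ℝ) + 1 / 2 = ((m : ℝ) + 1 / 2) + 1 by push_cast; ring,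
      Real.Gamma_add_one (by positivity), show 2 * (m + 1) = (2 * m + 1) + 1 by ring,
      Nat.factorial_succ, Nat.factorial_succ, Nat.factorial_succ]
    push_cast
    linear_combination (4 * (m + 1/2) * (m + 1) : ℝ) * ih

lemma zeta_neg (m : ℕ) : riemannZeta (-1 - 2 * m) =
    -(2 * ((2 * m).factorial : ℂ) * ((-1) ^ m * (2 * m + 1) * ((4 * π ^ 2 : ℂ) ^ (m + 1))⁻¹)) * riemannZeta ((2 * m + 2 : ℕ) : ℂ) := by
  have h := riemannZeta_one_sub (s := ((2 * m + 2 : ℕ) : ℂ)) (fun n h => by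
      have := congrArg Complex.re h
      simp at this
      have h1 : (0 : ℝ) ≤ n := Nat.cast_nonneg n
      have h2 : (0 : ℝ) ≤ m := Nat.cast_nonneg m
      linarith) (fun h => by
      have h' : (2 * m + 2 : ℕ) = 1 := by exact_mod_cast h
      omega)
  rw [show (1 : ℂ) - ((2 * m + 2 : ℕ) : ℂ) = -1 - 2 * m by push_cast; ring] at h
  rw [h, Complex.cpow_neg, Complex.cpow_natCast]
  have hg : Complex.Gamma ((2 * m + 2 : ℕ) : ℂ) = (2 * m + 1) * ((2 * m).factorial : ℂ) := by
    rw [show ((2 * m + 2 : ℕ) : ℂ) = ((2 * m + 1 : ℕ) : ℂ) + 1 by push_cast; ring, Complex.Gamma_nat_eq_factorial,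
      Nat.factorial_succ]
    push_cast; ring
  have hc : Complex.cos (π * ((2 * m + 2 : ℕ) : ℂ) / 2) = -(-1) ^ m := by
    rw [show (π : ℂ) * ((2 * m + 2 : ℕ) : ℂ) / 2 = ((((m + 1 : ℕ) : ℝ) * π : ℝ) : ℂ) by push_cast; ring,
      ← Complex.ofReal_cos, Real.cos_nat_mul_pi]
    push_cast; ring
  rw [hg, hc, show (4 * (π : ℂ) ^ 2) = (2 * π) ^ 2 by ring, ← pow_mul, show 2 * (m + 1) = 2 * m + 2 by ring]
  ring

lemma lhs_eq (m : ℕ) (β : ℝ) (hβ : 0 < β) :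
    (∑' n : ℕ, ((rpsi (2 * m + 1) (n + 1) / Real.sqrt ((n : ℝ) + 1) *
        Real.exp (-Real.sqrt (((n : ℝ) + 1) * β)) *
        Real.sin (π / 4 - Real.sqrt (((n : ℝ) + 1) * β)) : ℝ) : ℂ))
    = ∑' k : ℕ+, ∑' j : ℕ+, ((uf m β j k : ℝ) : ℂ) := by
  have hs := uf_summable m β hβ
  have h1 := fiber_sum (fun j k => ((uf m β j k : ℝ) : ℂ)) hs
  have hc : ∑' j : ℕ+, ∑' k : ℕ+, ((uf m β j k : ℝ) : ℂ)
      = ∑' k : ℕ+, ∑' j : ℕ+, ((uf m β j k : ℝ) : ℂ) :=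
    Summable.tsum_comm (f := fun k j : ℕ+ => ((uf m β j k : ℝ) : ℂ)) hs.prod_symm
  rw [Summable.tsum_prod hs] at h1
  replace h1 := h1.trans hc
  rw [← h1]
  refine tsum_congr fun n => ?_
  rw [← Complex.ofReal_sum]
  congr 1
  unfold rpsi
  rw [Finset.sum_div, Finset.sum_mul, Finset.sum_mul]
  refine Finset.sum_congr rfl fun j hj => ?_
  rw [Finset.mem_filter, Finset.mem_Icc] at hj
  obtain ⟨⟨hj1, hj2⟩, k, hk⟩ := hj
  have hj0 : (0 : ℝ) < (j : ℝ) := by exact_mod_cast hj1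
  rw [hk, Nat.mul_div_cancel_left _ (by positivity)]
  have hk' : (n : ℝ) + 1 = (j : ℝ) ^ 2 * k := by exact_mod_cast hk
  rw [hk', mul_assoc ((j : ℝ) ^ 2), Real.sqrt_mul (by positivity) ((k : ℝ) * β), Real.sqrt_mul (by positivity) (k : ℝ), Real.sqrt_sq hj0.le]
  unfold uf
  rw [show (2 * (m : ℝ) + 1) = ((2 * m + 1 : ℕ) : ℝ) by push_cast; ring, Real.rpow_natCast, pow_succ]
  congr 2
  field_simp

lemma rhs_eq (m : ℕ) (α : ℝ) (hα : 0 < α) :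
    ∑' n : ℕ, ((rpsi (-(2 * (m : ℝ))) (n + 1) * ((n : ℝ) + 1) ^ (m : ℕ) : ℝ) : ℂ) *
          F11 ((m : ℂ) + 1 / 2) (1 / 2) (-(((n : ℝ) + 1) * α : ℝ))
    = ∑' l : ℕ+, ∑' n : ℕ+, (n : ℂ) ^ m * F11 ((m : ℂ) + 1 / 2) (1 / 2) (-(((n : ℝ) * (l : ℝ) ^ 2) * α : ℝ)) := by
  have hs := S2 m α hα
  have h1 := fiber_sum (fun l n => (n : ℂ) ^ m * F11 ((m : ℂ) + 1 / 2) (1 / 2) (-(((n : ℝ) * (l : ℝ) ^ 2) * α : ℝ))) hs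
  rw [Summable.tsum_prod hs] at h1
  rw [← h1]
  refine tsum_congr fun n => ?_
  unfold rpsi
  rw [Finset.sum_mul, Complex.ofReal_sum, Finset.sum_mul]
  refine Finset.sum_congr rfl fun j hj => ?_
  rw [Finset.mem_filter, Finset.mem_Icc] at hj
  obtain ⟨⟨hj1, hj2⟩, k, hk⟩ := hj
  have hj0 : (0 : ℝ) < (j : ℝ) := by exact_mod_cast hj1
  rw [hk, Nat.mul_div_cancel_left _ (by positivity)]
  have hk' : (n : ℝ) + 1 = (k : ℝ) * (j : ℝ) ^ 2 := by rw [mul_comm]; exact_mod_cast hk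
  rw [hk']
  congr 1
  rw [Real.rpow_neg hj0.le, show (2 * (m : ℝ)) = ((2 * m : ℕ) : ℝ) by push_cast; ring, Real.rpow_natCast,
    mul_pow, ← pow_mul]
  rw [show ((j : ℝ) ^ (2 * m))⁻¹ * ((k : ℝ) ^ m * (j : ℝ) ^ (2 * m)) = (k : ℝ) ^ m by field_simp]
  push_cast; rfl

theorem ramanujan_wigert_odd (m : ℕ) (hm : 0 < m)
    (α β : ℝ) (hα : 0 < α) (hβ : 0 < β) (hαβ : α * β = 4 * π ^ 3) :
    (∑' n : ℕ, ((rpsi (2 * m + 1) (n + 1) / Real.sqrt ((n : ℝ) + 1) *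
        Real.exp (-Real.sqrt (((n : ℝ) + 1) * β)) *
        Real.sin (π / 4 - Real.sqrt (((n : ℝ) + 1) * β)) : ℝ) : ℂ))
    = ((Real.sqrt β / Real.sqrt 2 : ℝ) : ℂ) * riemannZeta (-1 - 2 * m)
      - (((Nat.factorial (2 * m) : ℝ) * Real.sin (π * m / 2) *
            (2 * β) ^ (-((m : ℝ) + 1 / 2)) : ℝ) : ℂ) * riemannZeta (1 + m)
      + (1 / (Real.sqrt 2 : ℂ)) * riemannZeta (1 / 2) * riemannZeta (-2 * m)
      + (((2 : ℝ) ^ (m : ℕ) * (2 * π / β) ^ ((m : ℝ) + 1 / 2) *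
            Real.Gamma ((m : ℝ) + 1 / 2) : ℝ) : ℂ) *
        ∑' n : ℕ, ((rpsi (-(2 * (m : ℝ))) (n + 1) * ((n : ℝ) + 1) ^ (m : ℕ) : ℝ) : ℂ) *
          F11 ((m : ℂ) + 1 / 2) (1 / 2) (-(((n : ℝ) + 1) * α : ℝ)) := by
  have hz : riemannZeta (-2 * m) = 0 := by
    obtain ⟨q, rfl⟩ := Nat.exists_eq_succ_of_ne_zero hm.ne'
    have := riemannZeta_neg_two_mul_nat_add_one q
    rw [← this]
    push_cast
    rfl
  rw [lhs_eq m β hβ, rhs_eq m α hα, hz, mul_zero, add_zero]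
  simp_rw [L2 m hm β hβ]
  have s3 := S3 m hm β hβ
  have s3' : Summable fun k : ℕ+ => ∑' l : ℕ+, (Rf m β k l + Rf m β (-(k : ℂ)) l) := s3.prod
  rw [Summable.tsum_add ((summable_pnat_c (m + 1) (by omega)).mul_left _) (s3'.mul_left _),
    tsum_mul_left, tsum_mul_left, zeta_pnat (m + 1) (by omega)]
  have hcomm : ∑' k : ℕ+, ∑' l : ℕ+, (Rf m β k l + Rf m β (-(k : ℂ)) l)
      = ∑' l : ℕ+, ∑' k : ℕ+, (Rf m β k l + Rf m β (-(k : ℂ)) l) :=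
    Summable.tsum_comm (f := fun l k : ℕ+ => Rf m β k l + Rf m β (-(k : ℂ)) l) s3.prod_symm
  rw [hcomm]
  simp_rw [L4 m hm α β hα hβ hαβ]
  have s2 : Summable fun l : ℕ+ => ∑' n : ℕ+, (n : ℂ) ^ m * F11 ((m : ℂ) + 1 / 2) (1 / 2) (-(((n : ℝ) * (l : ℝ) ^ 2) * α : ℝ)) :=
    (S2 m α hα).prod
  rw [Summable.tsum_sub (s2.mul_left _) ((summable_pnat_c (2 * m + 2) (by omega)).mul_left _), tsum_mul_left, tsum_mul_left,
    zeta_pnat (2 * m + 2) (by omega), zeta_neg m]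
  set T := ∑' l : ℕ+, ∑' n : ℕ+, (n : ℂ) ^ m * F11 ((m : ℂ) + 1 / 2) (1 / 2) (-(((n : ℝ) * (l : ℝ) ^ 2) * α : ℝ))
  have hconst : (2 : ℝ) ^ (m : ℕ) * (2 * π / β) ^ ((m : ℝ) + 1 / 2) * Real.Gamma ((m : ℝ) + 1 / 2)
      = ((2 * m).factorial : ℝ) * √(2 * β) * ((π / β) ^ (m + 1) / (m.factorial : ℝ)) := by
    have hpi := Real.pi_pos
    have f : (m.factorial : ℝ) ≠ 0 := by exact_mod_cast Nat.factorial_ne_zero _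
    have hg : Real.Gamma ((m : ℝ) + 1 / 2) = ((2 * m).factorial : ℝ) * √π / (4 ^ m * (m.factorial : ℝ)) := by
      rw [eq_div_iff (by positivity), gamma_const]
    rw [hg, Real.rpow_add (by positivity), Real.rpow_natCast, ← Real.sqrt_eq_rpow, Real.sqrt_div (by positivity),
      Real.sqrt_mul (by norm_num), Real.sqrt_mul (by norm_num)]
    have h1 : √π ^ 2 = π := Real.sq_sqrt hpi.le
    have h2 : √β ^ 2 = β := Real.sq_sqrt hβ.le
    have h3 : √β ≠ 0 := (Real.sqrt_pos.mpr hβ).ne'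
    have h4 : (4 : ℝ) ^ m = 2 ^ m * 2 ^ m := by rw [← mul_pow]; norm_num
    rw [h4, div_pow, div_pow, mul_pow, pow_succ, pow_succ]
    field_simp
    rw [h1, h2]
    ring
  have hsq : ((√β / √2 : ℝ) : ℂ) * 2 = (√(2 * β) : ℝ) := by
    rw [Real.sqrt_mul (by norm_num)]
    have n2 : ((√2 : ℝ) : ℂ) ≠ 0 := by exact_mod_cast (Real.sqrt_pos.mpr (by norm_num : (0:ℝ) < 2)).ne'
    have e3 : ((√2 : ℝ) : ℂ) ^ 2 = 2 := by rw [← Complex.ofReal_pow, Real.sq_sqrt (by norm_num)]; norm_num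
    push_cast
    field_simp
    rw [e3]
  rw [hconst, ← hsq, show ((m + 1 : ℕ) : ℂ) = 1 + m by push_cast; ring]
  push_cast at hsq ⊢
  rw [← hsq]
  ring
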